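/- Let $K$ be an algebraically closed field and let $\Gamma$ be a Brauer tree of multiplicity one, i.e. a finite tree with a fixed cyclic ordering of the edges incident to each vertex. The Brauer quiver $Q$ of $\Gamma$ has the edges of $\Gamma$ as vertices and, for each edge $i$ and each end point $x$ of $i$, one arrow from $i$ to the edge that follows $i$ in the cyclic order around $x$ (a loop if $x$ is a leaf). Thus $Q$ is a union of oriented cycles, one for each vertex of $\Gamma$ (of positive degree), and each vertex of $Q$ lies on exactly two of them. Let $A$ be the basic Brauer tree algebra of $\Gamma$, i.e. the path algebra $KQ$ (where $ab$ is the path $a$ followed by $b$) modulo the relations that $ab=0$ for composable arrows $a,b$ lying on different cycles, and that for each vertex of $Q$ the two full cycles starting at it are equal. Modules are finitely generated left modules, and $e_i$ is the idempotent of the vertex $i$. An $A$-cycle is a maximal ordered set of nonrepeating arrows of $Q$ such that the product in $A$ of any two neighboring arrows is nonzero; a vertex of $Q$ belongs to it if it is the source or the target of one of its arrows. A two-term partial tilting complex is a complex $T$ of finitely generated projective $A$-modules concentrated in degrees $0$ and $1$ with $\mathrm{Hom}_{D^b(A)}(T,T[k])=0$ for all $k\neq 0$. Suppose that such a complex $T=(P_0\xrightarrow{f}P_1)$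 is the minimal projective presentation of an indecomposable non-projective module, and write $P_0=\bigoplus_{i\in I}Ae_i$, $P_1=\bigoplus_{j\in J}Ae_j$. The diagram of $T$ consists of the vertices of $Q$ in $I\cup J$ and, for all $i\in I$ and $j\in J$ such that the component $Ae_i\to Ae_j$ of $f$ is nonzero, of the path from $i$ to $j$ along the cycle of $Q$ that contains both. Let $T_i$ and $T_j$ be indecomposable two-term partial tilting complexes over $A$, each of which is the minimal projective presentation of an indecomposable non-projective module. If no $A$-cycle contains both a vertex of the diagram of $T_i$ and a vertex of the diagram of $T_j$, then $\mathrm{Hom}_{D^b(A)}(T_i,T_j[-1])=0$. -/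

import Mathlib

open CategoryTheory

universe u v w

/-- A Brauer tree with multiplicity one: a tree together with a cyclic ordering of the edges
incident to each vertex. A dart `d` of the tree is an edge together with one of its end points
`d.fst`; the cyclic orderings are given by the permutation `next`, which sends the edge `d.edge`,
seen from the vertex `d.fst`, to the edge that follows it around that vertex. -/
structure BrauerTree (V : Type v) where
  graph : SimpleGraph V
  isTree : graph.IsTree
  next : Equiv.Perm graph.Dart
  next_fst : ∀ d, (next d).fst = d.fst
  sameCycle_of_fst_eq : ∀ d d' : graph.Dart, d.fst = d'.fst → next.SameCycle d d'

namespace BrauerTree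

variable {V : Type v} (Γ : BrauerTree V)

/-- The vertices of the Brauer quiver are the edges of the tree. -/
abbrev Edge : Type v := Γ.graph.edgeSet

/-- The arrows of the Brauer quiver: for each edge `i` and each end point `x` of it there is one
arrow from `i` to the edge that follows `i` around `x` (a loop if `x` is a leaf). -/
abbrev Arrow : Type v := Γ.graph.Dart

variable {Γ} in
/-- The source of an arrow of the quiver. -/
def source (a : Γ.Arrow) : Γ.Edge := ⟨a.edge, a.edge_mem⟩

/-- The target of an arrow of the quiver. -/
def target (a : Γ.Arrow) : Γ.Edge := source (Γ.next a)

/-- The generators of the path algebra of the quiver: its trivial paths and its arrows. -/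
inductive Gen : Type v
  | triv (i : Γ.Edge) : Gen
  | arr (a : Γ.Arrow) : Gen

variable (K : Type u) [Field K]

/-- The trivial path at `i`, in the free algebra. -/
def freeTriv (i : Γ.Edge) : FreeAlgebra K Γ.Gen := FreeAlgebra.ι K (Gen.triv i)

/-- The arrow `a`, in the free algebra. -/
def freeArr (a : Γ.Arrow) : FreeAlgebra K Γ.Gen := FreeAlgebra.ι K (Gen.arr a)

/-- The path that starts with the arrow `a` and goes once around the cycle of `a`. -/
noncomputable def freeCycle (a : Γ.Arrow) : FreeAlgebra K Γ.Gen :=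
  ((List.range (Function.minimalPeriod Γ.next a)).map fun k => Γ.freeArr K (Γ.next^[k] a)).prod

/-- The relations of the Brauer tree algebra. The first five are those of the path algebra of
the quiver, where the product `a * b` is the path `a` followed by `b`. The arrows that start at
the target of `a` are `next a`, which continues the cycle of `a`, and `(next a).symm`, which lies
on the other cycle through this vertex; the sixth relation thus says `αβ = 0 = βα`. The last one
says that the two full cycles that start at the same vertex are equal. -/
inductive Rel : FreeAlgebra K Γ.Gen → FreeAlgebra K Γ.Gen → Prop
  | triv_mul_self (i : Γ.Edge) : Rel (Γ.freeTriv K i * Γ.freeTriv K i) (Γ.freeTriv K i)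
  | triv_mul_triv (i j : Γ.Edge) (h : i ≠ j) : Rel (Γ.freeTriv K i * Γ.freeTriv K j) 0
  | sum_triv : Rel (∑ᶠ i : Γ.Edge, Γ.freeTriv K i) 1
  | source_mul (a : Γ.Arrow) :
      Rel (Γ.freeTriv K (source a) * Γ.freeArr K a) (Γ.freeArr K a)
  | mul_target (a : Γ.Arrow) :
      Rel (Γ.freeArr K a * Γ.freeTriv K (Γ.target a)) (Γ.freeArr K a)
  | arr_mul_other (a : Γ.Arrow) : Rel (Γ.freeArr K a * Γ.freeArr K (Γ.next a).symm) 0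
  | cycle_eq (a : Γ.Arrow) : Rel (Γ.freeCycle K a) (Γ.freeCycle K a.symm)

/-- The basic Brauer tree algebra of `Γ` with multiplicity one. -/
abbrev Alg : Type (max u v) := RingQuot (Γ.Rel K)

/-- The idempotent `e_i` of the algebra. -/
noncomputable def idem (i : Γ.Edge) : Γ.Alg K := RingQuot.mkAlgHom K (Γ.Rel K) (Γ.freeTriv K i)

/-- The element of the algebra given by an arrow. -/
noncomputable def arrow (a : Γ.Arrow) : Γ.Alg K :=
  RingQuot.mkAlgHom K (Γ.Rel K) (Γ.freeArr K a)

/-- The indecomposable projective left module `A e_i`. -/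
noncomputable abbrev proj (i : Γ.Edge) : Submodule (Γ.Alg K) (Γ.Alg K) :=
  Submodule.span (Γ.Alg K) {Γ.idem K i}

/-- An ordered set of nonrepeating arrows such that the product of any two neighbors is nonzero
in the algebra. -/
def IsArrowChain (L : List Γ.Arrow) : Prop :=
  L.Nodup ∧ L.IsChain fun a b => Γ.arrow K a * Γ.arrow K b ≠ 0

/-- An `A`-cycle: a maximal ordered set of nonrepeating arrows such that the product of any two
neighbors is nonzero. -/
def IsACycle (L : List Γ.Arrow) : Prop :=
  Γ.IsArrowChain K L ∧ ∀ L' : List Γ.Arrow, Γ.IsArrowChain K L' → L.Sublist L' → L' = L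

/-- The vertex `i` of the quiver belongs to the `A`-cycle `L`. -/
def MemCycle (i : Γ.Edge) (L : List Γ.Arrow) : Prop :=
  ∃ a ∈ L, source a = i ∨ Γ.target a = i

/-- The arrows of the directed path of the quiver that starts at the vertex `i`, runs along one
cycle and stops when it first meets the vertex `j`. (For `i ≠ j` on a common cycle, this
cycle is unique because `Γ` is a tree.) -/
def pathArrows (i j : Γ.Edge) : Set Γ.Arrow :=
  {a | ∃ (b : Γ.Arrow) (m k : ℕ), source b = i ∧ source (Γ.next^[m] b) = j ∧
    (∀ l < m, source (Γ.next^[l] b) ≠ j) ∧ k < m ∧ a = Γ.next^[k] b}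

/-- Cochain complexes of left modules over the Brauer tree algebra. -/
abbrev Cplx : Type _ := CochainComplex (ModuleCat.{max u v} (Γ.Alg K)) ℤ

variable {Γ K}

/-- A complex of finitely generated projective modules concentrated in degrees `0` and `1`. -/
def IsTwoTermPerfect (T : Γ.Cplx K) : Prop :=
  (∀ n : ℤ, Module.Finite (Γ.Alg K) (T.X n) ∧ Module.Projective (Γ.Alg K) (T.X n)) ∧
  ∀ n : ℤ, n ≠ 0 → n ≠ 1 → Limits.IsZero (T.X n)

/-- `Hom(S, T[k]) = 0` in the derived category. The bounded derived category of finitely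
generated modules is a full subcategory of the derived category of all modules. -/
def HomVanishes [HasDerivedCategory.{w} (ModuleCat.{max u v} (Γ.Alg K))]
    (S T : Γ.Cplx K) (k : ℤ) : Prop :=
  ∀ f : DerivedCategory.Q.obj S ⟶ (shiftFunctor _ k).obj (DerivedCategory.Q.obj T), f = 0

/-- `T` is an indecomposable two-term partial tilting complex (in degrees `0` and `1`). -/
def IsIndecTwoTermPartialTilting [HasDerivedCategory.{w} (ModuleCat.{max u v} (Γ.Alg K))]
    (T : Γ.Cplx K) : Prop :=
  IsTwoTermPerfect T ∧ Indecomposable (DerivedCategory.Q.obj T) ∧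
    ∀ k : ℤ, k ≠ 0 → HomVanishes T T k

/-- A submodule `S` is superfluous if `N + S` is the whole module only if `N` is. -/
def IsSuperfluous {R : Type*} [Ring R] {M : Type*} [AddCommGroup M] [Module R M]
    (S : Submodule R M) : Prop :=
  ∀ N : Submodule R M, N ⊔ S = ⊤ → N = ⊤

/-- `T = (P_0 → P_1)` is a minimal projective presentation `P_0 → P_1 → M → 0`: the maps
`P_1 → M` and from `P_0` onto the kernel of `P_1 → M` are projective covers. -/
def IsMinimalPresentation (T : Γ.Cplx K) (M : ModuleCat.{max u v} (Γ.Alg K)) : Prop :=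
  IsTwoTermPerfect T ∧ ∃ π : T.X 1 ⟶ M,
    Function.Surjective π.hom ∧ LinearMap.range (T.d 0 1).hom = LinearMap.ker π.hom ∧
    IsSuperfluous (LinearMap.ker π.hom) ∧ IsSuperfluous (LinearMap.ker (T.d 0 1).hom)

/-- `T` is a minimal projective presentation of an indecomposable non-projective module. -/
def IsPresentation (T : Γ.Cplx K) : Prop :=
  ∃ M : ModuleCat.{max u v} (Γ.Alg K),
    Indecomposable M ∧ ¬ Module.Projective (Γ.Alg K) M ∧ IsMinimalPresentation T M

/-- A decomposition `P_0 = ⨁ A e_i`, `P_1 = ⨁ A e_j` of the terms of `T = (P_0 → P_1)`. -/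
structure Decomposition (T : Γ.Cplx K) where
  n₀ : ℕ
  n₁ : ℕ
  vert₀ : Fin n₀ → Γ.Edge
  vert₁ : Fin n₁ → Γ.Edge
  equiv₀ : T.X 0 ≃ₗ[Γ.Alg K] ((p : Fin n₀) → Γ.proj K (vert₀ p))
  equiv₁ : T.X 1 ≃ₗ[Γ.Alg K] ((q : Fin n₁) → Γ.proj K (vert₁ q))

namespace Decomposition

variable {T : Γ.Cplx K} (D : Decomposition T)

/-- The component of the differential between two summands of `P_0` and `P_1`. -/
noncomputable def component (p : Fin D.n₀) (q : Fin D.n₁) :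
    Γ.proj K (D.vert₀ p) →ₗ[Γ.Alg K] Γ.proj K (D.vert₁ q) :=
  LinearMap.proj q ∘ₗ D.equiv₁.toLinearMap ∘ₗ (T.d 0 1).hom ∘ₗ D.equiv₀.symm.toLinearMap ∘ₗ
    LinearMap.single (Γ.Alg K) (fun p => Γ.proj K (D.vert₀ p)) p

/-- The marked vertices of the diagram: the indices of the summands of `P_0` and of `P_1`. -/
def marked : Set Γ.Edge := Set.range D.vert₀ ∪ Set.range D.vert₁

/-- The arrows of the diagram: those on the paths from `i` to `j` for which the component of the
differential from `A e_i` to `A e_j` is nonzero. -/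
def diagramArrows : Set Γ.Arrow :=
  {a | ∃ p q, D.component p q ≠ 0 ∧ a ∈ Γ.pathArrows (D.vert₀ p) (D.vert₁ q)}

/-- The vertices of the diagram: the marked vertices and those on the marked paths. -/
def diagramVertices : Set Γ.Edge :=
  D.marked ∪ {i | ∃ a ∈ D.diagramArrows, source a = i ∨ Γ.target a = i}

end Decomposition

end BrauerTree

namespace BrauerTree

section Chains

variable {K : Type u} [Field K] {V : Type v} {Γ : BrauerTree V}

/-- Every chain of arrows is a sublist of an `A`-cycle. -/
theorem IsArrowChain.exists_isACycle [Finite V] {L : List Γ.Arrow} (hL : Γ.IsArrowChain K L) :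
    ∃ L', Γ.IsACycle K L' ∧ L.Sublist L' := by
  classical
  have : Fintype V := Fintype.ofFinite V
  have : Fintype Γ.Arrow := Fintype.ofFinite _
  induction hn : Fintype.card Γ.Arrow - L.length using Nat.strong_induction_on generalizing L with
  | _ n ih =>
    by_cases hmax : ∀ L' : List Γ.Arrow, Γ.IsArrowChain K L' → L.Sublist L' → L' = L
    · exact ⟨L, ⟨hL, hmax⟩, List.Sublist.refl L⟩
    · push Not at hmax
      obtain ⟨L', hL', hsub, hne⟩ := hmax
      have hlt : L.length < L'.length := by
        rcases hsub.length_le.lt_or_eq with h | h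
        · exact h
        · exact absurd (hsub.eq_of_length h).symm hne
      have hcard : L'.length ≤ Fintype.card Γ.Arrow := hL'.1.length_le_card
      obtain ⟨L'', hL'', hsub'⟩ := ih _ (by omega) hL' rfl
      exact ⟨L'', hL'', hsub.trans hsub'⟩

/-- Two vertices that belong to a chain lie on a common `A`-cycle. -/
theorem IsArrowChain.exists_common [Finite V] {L : List Γ.Arrow} (hL : Γ.IsArrowChain K L)
    {x y : Γ.Edge} (hx : Γ.MemCycle x L) (hy : Γ.MemCycle y L) :
    ∃ L', Γ.IsACycle K L' ∧ Γ.MemCycle x L' ∧ Γ.MemCycle y L' := by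
  obtain ⟨L', hL', hsub⟩ := hL.exists_isACycle
  obtain ⟨a, ha, hax⟩ := hx
  obtain ⟨b, hb, hby⟩ := hy
  exact ⟨L', hL', ⟨a, hsub.subset ha, hax⟩, ⟨b, hsub.subset hb, hby⟩⟩

end Chains

section Paths

variable (K : Type u) [Field K] {V : Type v} (Γ : BrauerTree V)

theorem idem_mul_self (i : Γ.Edge) : Γ.idem K i * Γ.idem K i = Γ.idem K i := by
  simpa [idem] using RingQuot.mkAlgHom_rel K (Rel.triv_mul_self (Γ := Γ) (K := K) i)

theorem idem_mul_idem_of_ne {i j : Γ.Edge} (h : i ≠ j) : Γ.idem K i * Γ.idem K j = 0 := by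
  simpa [idem] using RingQuot.mkAlgHom_rel K (Rel.triv_mul_triv (Γ := Γ) (K := K) i j h)

theorem idem_source_mul_arrow (a : Γ.Arrow) :
    Γ.idem K (source a) * Γ.arrow K a = Γ.arrow K a := by
  simpa [idem, arrow] using RingQuot.mkAlgHom_rel K (Rel.source_mul (Γ := Γ) (K := K) a)

theorem arrow_mul_idem_target (a : Γ.Arrow) :
    Γ.arrow K a * Γ.idem K (Γ.target a) = Γ.arrow K a := by
  simpa [idem, arrow] using RingQuot.mkAlgHom_rel K (Rel.mul_target (Γ := Γ) (K := K) a)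

theorem arrow_mul_arrow_symm (a : Γ.Arrow) :
    Γ.arrow K a * Γ.arrow K (Γ.next a).symm = 0 := by
  simpa [arrow] using RingQuot.mkAlgHom_rel K (Rel.arr_mul_other (Γ := Γ) (K := K) a)

/-- The path of length `k` along the cycle of `a` that starts with `a`. -/
noncomputable def path (a : Γ.Arrow) : ℕ → Γ.Alg K
  | 0 => Γ.idem K (source a)
  | k + 1 => path a k * Γ.arrow K (Γ.next^[k] a)

theorem target_iterate (a : Γ.Arrow) (k : ℕ) :
    Γ.target (Γ.next^[k] a) = source (Γ.next^[k + 1] a) := by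
  rw [target, Function.iterate_succ_apply']

theorem path_mul_idem (a : Γ.Arrow) (k : ℕ) :
    Γ.path K a k * Γ.idem K (source (Γ.next^[k] a)) = Γ.path K a k := by
  cases k with
  | zero => exact Γ.idem_mul_self K _
  | succ k => rw [path, mul_assoc, ← target_iterate, arrow_mul_idem_target]

theorem path_mul_idem_of_ne (a : Γ.Arrow) (k : ℕ) {j : Γ.Edge}
    (h : source (Γ.next^[k] a) ≠ j) : Γ.path K a k * Γ.idem K j = 0 := by
  rw [← path_mul_idem, mul_assoc, idem_mul_idem_of_ne K Γ h, mul_zero]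

theorem path_mul_arrow_of_ne (a b : Γ.Arrow) (k : ℕ)
    (h : source (Γ.next^[k] a) ≠ source b) : Γ.path K a k * Γ.arrow K b = 0 := by
  rw [← idem_source_mul_arrow, ← mul_assoc, path_mul_idem_of_ne K Γ a k h, zero_mul]

theorem source_eq_source_iff (a b : Γ.Arrow) : source a = source b ↔ a = b ∨ a = b.symm := by
  rw [source, source, Subtype.mk.injEq, SimpleGraph.dart_edge_eq_iff]

theorem source_symm (a : Γ.Arrow) : source (Γ := Γ) a.symm = source a :=
  (Γ.source_eq_source_iff _ _).2 (Or.inr rfl)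

/-- A path times an arrow is again zero or a path. -/
theorem path_mul_arrow (a b : Γ.Arrow) (k : ℕ) :
    Γ.path K a k * Γ.arrow K b = 0 ∨
      ∃ c l, source c = source a ∧ Γ.path K a k * Γ.arrow K b = Γ.path K c l := by
  by_cases h : source (Γ.next^[k] a) = source b
  · rcases (Γ.source_eq_source_iff _ _).1 h with h | h
    · exact Or.inr ⟨a, k + 1, rfl, by rw [path, h]⟩
    · cases k with
      | zero =>
        have hb : source b = source a := h.symm ▸ Γ.source_symm b |>.symm
        refine Or.inr ⟨b, 1, hb, ?_⟩
        rw [path, path, path, hb, Function.iterate_zero, id]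
      | succ k =>
        left
        have hb : b = (Γ.next (Γ.next^[k] a)).symm := by
          rw [← Function.iterate_succ_apply' Γ.next, h, SimpleGraph.Dart.symm_symm]
        rw [path, mul_assoc, hb, arrow_mul_arrow_symm, mul_zero]
  · exact Or.inl (Γ.path_mul_arrow_of_ne K a b k h)

/-- The algebra is spanned by the products of trivial paths and arrows. -/
theorem span_closure_generators :
    Submodule.span K (Submonoid.closure
      (Set.range (Γ.idem K) ∪ Set.range (Γ.arrow K)) : Set (Γ.Alg K)) = ⊤ := by
  have hgen : RingQuot.mkAlgHom K (Γ.Rel K) '' Set.range (FreeAlgebra.ι K) =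
      Set.range (Γ.idem K) ∪ Set.range (Γ.arrow K) := by
    ext z
    constructor
    · rintro ⟨_, ⟨g, rfl⟩, rfl⟩
      cases g with
      | triv i => exact Or.inl ⟨i, rfl⟩
      | arr a => exact Or.inr ⟨a, rfl⟩
    · rintro (⟨i, rfl⟩ | ⟨a, rfl⟩)
      · exact ⟨_, ⟨Gen.triv i, rfl⟩, rfl⟩
      · exact ⟨_, ⟨Gen.arr a, rfl⟩, rfl⟩
  rw [← Algebra.adjoin_eq_span, ← hgen, ← AlgHom.map_adjoin, FreeAlgebra.adjoin_range_ι,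
    Algebra.map_top, (AlgHom.range_eq_top _).2 (RingQuot.mkAlgHom_surjective K _),
    Algebra.top_toSubmodule]

/-- Starting with a trivial path, a product of generators is zero or a path along a cycle. -/
theorem idem_mul_word (x : Γ.Edge) {w : Γ.Alg K}
    (hw : w ∈ Submonoid.closure (Set.range (Γ.idem K) ∪ Set.range (Γ.arrow K))) :
    Γ.idem K x * w = 0 ∨ ∃ a k, source a = x ∧ Γ.idem K x * w = Γ.path K a k := by
  induction hw using Submonoid.closure_induction_right with
  | one =>
    obtain ⟨⟨e, he⟩, hx⟩ : ∃ a : Γ.Arrow, source a = x := by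
      obtain ⟨e, he⟩ := x
      induction e with
      | _ u v => exact ⟨⟨(u, v), he⟩, rfl⟩
    exact Or.inr ⟨_, 0, hx, by rw [path, hx, mul_one]⟩
  | mul_right w hw g hg ih =>
    rw [← mul_assoc]
    rcases ih with h | ⟨a, k, ha, h⟩
    · exact Or.inl (by rw [h, zero_mul])
    rw [h]
    rcases hg with ⟨j, rfl⟩ | ⟨b, rfl⟩
    · by_cases hj : source (Γ.next^[k] a) = j
      · exact Or.inr ⟨a, k, ha, by rw [← hj, path_mul_idem]⟩
      · exact Or.inl (Γ.path_mul_idem_of_ne K a k hj)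
    · rcases Γ.path_mul_arrow K a b k with h0 | ⟨c, l, hc, hcl⟩
      · exact Or.inl h0
      · exact Or.inr ⟨c, l, hc.trans ha, hcl⟩

variable {K Γ} in
theorem path_ne_zero_of_le {a : Γ.Arrow} {k m : ℕ} (hmk : m ≤ k) (h : Γ.path K a k ≠ 0) :
    Γ.path K a m ≠ 0 := by
  induction k, hmk using Nat.le_induction with
  | base => exact h
  | succ k _ ih => exact ih (left_ne_zero_of_mul h)

variable {K Γ} in
/-- The distinct arrows of a nonzero path form a chain. -/
theorem isArrowChain_of_path_ne_zero {a : Γ.Arrow} {k m : ℕ} (h : Γ.path K a k ≠ 0)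
    (hmk : m ≤ k) (hm : m ≤ Function.minimalPeriod Γ.next a) :
    Γ.IsArrowChain K ((List.range m).map fun l => Γ.next^[l] a) := by
  refine ⟨?_, ?_⟩
  · refine List.nodup_range.map_on fun p hp q hq hpq => ?_
    rw [List.mem_range] at hp hq
    exact Function.iterate_injOn_Iio_minimalPeriod (Set.mem_Iio.2 (hp.trans_le hm))
      (Set.mem_Iio.2 (hq.trans_le hm)) hpq
  · rw [List.isChain_map, List.isChain_range]
    intro l hl
    have h2 : Γ.path K a (l + 2) ≠ 0 := path_ne_zero_of_le (by omega) h
    rw [path, path, mul_assoc] at h2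
    exact right_ne_zero_of_mul h2

variable {K Γ} in
/-- The end points of a nonzero path lie on a common `A`-cycle. -/
theorem exists_isACycle_of_path_ne_zero [Finite V] {a : Γ.Arrow} {k : ℕ}
    (h : Γ.path K a k ≠ 0) :
    ∃ L, Γ.IsACycle K L ∧ Γ.MemCycle (source a) L ∧ Γ.MemCycle (source (Γ.next^[k] a)) L := by
  classical
  have : Fintype V := Fintype.ofFinite V
  have : Finite Γ.Arrow := inferInstance
  have hper : 0 < Function.minimalPeriod Γ.next a :=
    Function.minimalPeriod_pos_of_mem_periodicPts
      (Function.Injective.mem_periodicPts Γ.next.injective a)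
  rcases Nat.eq_zero_or_pos k with rfl | hk
  · have hchain : Γ.IsArrowChain K [a] := ⟨List.nodup_singleton a, List.isChain_singleton a⟩
    have ha : Γ.MemCycle (source a) [a] := ⟨a, List.mem_singleton_self a, Or.inl rfl⟩
    exact hchain.exists_common ha ha
  · have hchain := isArrowChain_of_path_ne_zero h (min_le_left k _) (min_le_right _ _)
    refine hchain.exists_common ⟨a, ?_, Or.inl rfl⟩ ?_
    · exact List.mem_map.2 ⟨0, List.mem_range.2 (lt_min hk hper), rfl⟩
    · rcases le_or_gt k (Function.minimalPeriod Γ.next a) with hle | hlt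
      · refine ⟨Γ.next^[k - 1] a, List.mem_map.2 ⟨k - 1, List.mem_range.2 ?_, rfl⟩, Or.inr ?_⟩
        · rw [min_eq_left hle]
          omega
        · rw [target_iterate, Nat.sub_add_cancel hk]
      · refine ⟨Γ.next^[k] a, List.mem_map.2 ⟨k % Function.minimalPeriod Γ.next a,
          List.mem_range.2 ?_, Function.iterate_mod_minimalPeriod_eq⟩, Or.inl rfl⟩
        rw [min_eq_right hlt.le]
        exact Nat.mod_lt _ hper

variable {K Γ} in
/-- `e_x A e_y = 0` unless `x` and `y` lie on a common `A`-cycle. -/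
theorem idem_mul_mul_idem_eq_zero [Finite V] {x y : Γ.Edge}
    (h : ¬ ∃ L, Γ.IsACycle K L ∧ Γ.MemCycle x L ∧ Γ.MemCycle y L) (r : Γ.Alg K) :
    Γ.idem K x * r * Γ.idem K y = 0 := by
  have hr : r ∈ Submodule.span K (Submonoid.closure
      (Set.range (Γ.idem K) ∪ Set.range (Γ.arrow K)) : Set (Γ.Alg K)) := by
    rw [span_closure_generators]
    exact Submodule.mem_top
  induction hr using Submodule.span_induction with
  | mem w hw =>
    rcases Γ.idem_mul_word K x hw with h0 | ⟨a, k, rfl, hak⟩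
    · rw [h0, zero_mul]
    · rw [hak]
      by_contra hne
      have hy : source (Γ.next^[k] a) = y := by
        by_contra hy
        exact hne (Γ.path_mul_idem_of_ne K a k hy)
      subst hy
      exact h (exists_isACycle_of_path_ne_zero (left_ne_zero_of_mul hne))
  | zero => rw [mul_zero, zero_mul]
  | add r s _ _ hr hs => rw [mul_add, add_mul, hr, hs, add_zero]
  | smul c r _ hr => rw [mul_smul_comm, smul_mul_assoc, hr, smul_zero]

variable {K Γ} in
/-- `Hom(A e_x, A e_y) = 0` unless `x` and `y` lie on a common `A`-cycle. -/
theorem proj_hom_eq_zero [Finite V] {x y : Γ.Edge}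
    (h : ¬ ∃ L, Γ.IsACycle K L ∧ Γ.MemCycle x L ∧ Γ.MemCycle y L)
    (f : Γ.proj K x →ₗ[Γ.Alg K] Γ.proj K y) : f = 0 := by
  have hmem : Γ.idem K x ∈ Γ.proj K x := Submodule.mem_span_singleton_self _
  have hgen : f ⟨Γ.idem K x, hmem⟩ = 0 := by
    obtain ⟨r, hr⟩ := Submodule.mem_span_singleton.1 (f ⟨Γ.idem K x, hmem⟩).2
    have hself : Γ.idem K x • (⟨Γ.idem K x, hmem⟩ : Γ.proj K x) = ⟨Γ.idem K x, hmem⟩ :=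
      Subtype.ext (Γ.idem_mul_self K x)
    have hfix := congrArg Subtype.val (f.map_smul (Γ.idem K x) ⟨Γ.idem K x, hmem⟩)
    rw [hself, Submodule.coe_smul, ← hr, smul_eq_mul, smul_eq_mul, ← mul_assoc,
      idem_mul_mul_idem_eq_zero h, ← smul_eq_mul, hr] at hfix
    exact Subtype.ext hfix
  ext ⟨z, hz⟩
  obtain ⟨r, rfl⟩ := Submodule.mem_span_singleton.1 hz
  have hz' : (⟨r • Γ.idem K x, hz⟩ : Γ.proj K x) = r • ⟨Γ.idem K x, hmem⟩ := rfl
  rw [hz', map_smul, hgen, smul_zero, LinearMap.zero_apply]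

end Paths

section Complexes

variable {K : Type u} [Field K] {V : Type v} {Γ : BrauerTree V}

theorem IsTwoTermPerfect.isKProjective {T : Γ.Cplx K} (hT : IsTwoTermPerfect T) :
    T.IsKProjective := by
  have : T.IsStrictlyLE 1 := by
    rw [CochainComplex.isStrictlyLE_iff]
    exact fun n hn => hT.2 n (by omega) (by omega)
  have (n : ℤ) : Projective (T.X n) :=
    (IsProjective.iff_projective (T.X n)).1 (hT.1 n).2
  exact CochainComplex.isKProjective_of_projective T 1

/-- If there are no nonzero maps `S¹ → T⁰` between two-term complexes of projectives, then
`Hom(S, T[-1]) = 0` in the derived category. -/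
theorem homVanishes_neg_one [HasDerivedCategory.{w} (ModuleCat.{max u v} (Γ.Alg K))]
    {S T : Γ.Cplx K} (hS : IsTwoTermPerfect S) (hT : IsTwoTermPerfect T)
    (h : ∀ g : S.X 1 ⟶ T.X 0, g = 0) : HomVanishes S T (-1) := by
  have := hS.isKProjective
  have hzero (g : S ⟶ (shiftFunctor (Γ.Cplx K) (-1 : ℤ)).obj T) : g = 0 := by
    ext1 n
    by_cases hn : n = 1
    · subst hn
      exact h (g.f 1)
    by_cases hn' : n = 0
    · subst hn'
      exact (hT.2 (0 + -1) (by omega) (by omega)).eq_of_tgt _ _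
    · exact (hS.2 n hn' hn).eq_of_src _ _
  intro f
  let α := DerivedCategory.quotientCompQhIso (ModuleCat.{max u v} (Γ.Alg K))
  let e := (DerivedCategory.Q.commShiftIso (-1 : ℤ)).app T
  obtain ⟨g, hg⟩ := (CochainComplex.IsKProjective.Qh_map_bijective S
    ((HomotopyCategory.quotient _ _).obj ((shiftFunctor (Γ.Cplx K) (-1 : ℤ)).obj T))).surjective
      (α.hom.app S ≫ f ≫ e.inv ≫ α.inv.app _)
  obtain ⟨g, rfl⟩ := (HomotopyCategory.quotient _ _).map_surjective g
  rw [hzero g, Functor.map_zero, Functor.map_zero] at hg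
  rw [← cancel_epi (α.hom.app S), ← cancel_mono (e.inv ≫ α.inv.app _), Category.assoc, ← hg]
  simp

/-- Maps `S¹ → T⁰` vanish if they vanish between the indecomposable summands. -/
theorem Decomposition.hom_eq_zero {S T : Γ.Cplx K} (D : Decomposition S) (E : Decomposition T)
    (h : ∀ q p, ∀ f : Γ.proj K (D.vert₁ q) →ₗ[Γ.Alg K] Γ.proj K (E.vert₀ p), f = 0)
    (g : S.X 1 ⟶ T.X 0) : g = 0 := by
  have hg : E.equiv₀.toLinearMap ∘ₗ g.hom ∘ₗ D.equiv₁.symm.toLinearMap = 0 := by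
    refine LinearMap.pi_ext' fun q => LinearMap.ext fun z => funext fun p => ?_
    exact LinearMap.congr_fun (h q p (LinearMap.proj p ∘ₗ E.equiv₀.toLinearMap ∘ₗ g.hom ∘ₗ
      D.equiv₁.symm.toLinearMap ∘ₗ LinearMap.single (Γ.Alg K) (fun q => Γ.proj K (D.vert₁ q)) q)) z
  ext z
  have hz := LinearMap.congr_fun hg (D.equiv₁ z)
  simpa using hz

end Complexes

end BrauerTree

theorem hom_vanishes_of_no_common_cycle {K : Type u} [Field K] [IsAlgClosed K]
    {V : Type v} [Finite V] (Γ : BrauerTree V)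
    [HasDerivedCategory.{w} (ModuleCat.{max u v} (Γ.Alg K))]
    (Ti Tj : Γ.Cplx K)
    (hTi : BrauerTree.IsIndecTwoTermPartialTilting Ti)
    (hTj : BrauerTree.IsIndecTwoTermPartialTilting Tj)
    (hpi : BrauerTree.IsPresentation Ti) (hpj : BrauerTree.IsPresentation Tj)
    (Di : BrauerTree.Decomposition Ti) (Dj : BrauerTree.Decomposition Tj)
    (h : ¬ ∃ L : List Γ.Arrow, Γ.IsACycle K L ∧
      (∃ x ∈ Di.diagramVertices, Γ.MemCycle x L) ∧
      ∃ y ∈ Dj.diagramVertices, Γ.MemCycle y L) :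
    BrauerTree.HomVanishes Ti Tj (-1) := by
  refine BrauerTree.homVanishes_neg_one hTi.1 hTj.1 fun g =>
    Di.hom_eq_zero Dj (fun q p f => BrauerTree.proj_hom_eq_zero ?_ f) g
  rintro ⟨L, hL, hx, hy⟩
  exact h ⟨L, hL, ⟨_, Or.inl (Or.inr ⟨q, rfl⟩), hx⟩, ⟨_, Or.inl (Or.inl ⟨p, rfl⟩), hy⟩⟩
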